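/- arXiv:2405.19894 — 2 statements merged into one kernel-verified Lean document; each statement's English description precedes it below -/
import Mathlib

section
/- Let 𝔟 be the Borel subalgebra of sl₂ spanned by h and e, and let 𝒩 be the category of 𝔟-modules that are finitely generated, h-diagonalizable, and free as modules over U(e) = ℂ[e]. Then for every finite-dimensional sl₂-module V and every N ∈ 𝒩, the 𝔟-module (Res^{sl₂}_𝔟 V) ⊗_ℂ N again belongs to 𝒩; consequently 𝒩 carries the structure of a 𝒞-module category by restriction and tensoring. -/
/-!
Statement 7 (Mazorchuk-Zhu, Lemma on the category `𝒩` of `𝔟`-modules).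

Let `𝔟` be the Borel subalgebra of `sl₂` spanned by `h` and `e` (so a
`𝔟`-module is the data of two operators `hN`, `eN` with `[hN, eN] = 2 eN`),
and let `𝒩` be the category of `𝔟`-modules that are finitely generated,
`h`-diagonalizable and free over `U(e) = ℂ[e]`.  Then for every finite
dimensional `sl₂`-module `V` (given by operators `eV`, `fV`, `hV` satisfying
the `sl₂` relations) and every `N ∈ 𝒩`, the `𝔟`-module
`(Res^{sl₂}_𝔟 V) ⊗_ℂ N` (with operators `eV ⊗ 1 + 1 ⊗ eN` and
`hV ⊗ 1 + 1 ⊗ hN`) again belongs to `𝒩`; consequently `𝒩` carries the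
structure of a `𝒞`-module category by restriction and tensoring.
-/

open TensorProduct Polynomial

/-- An eigenvector of nonzero weight for the adjoint action is nilpotent. -/
lemma nilp_of_weight {V : Type} [AddCommGroup V] [Module ℂ V] [FiniteDimensional ℂ V]
    (e h : Module.End ℂ V) (c : ℂ) (hc : c ≠ 0) (hh : h * e - e * h = c • e) :
    ∃ m : ℕ, e ^ m = 0 := by
  by_contra! hne
  let ad : Module.End ℂ (Module.End ℂ V) := LinearMap.mulLeft ℂ h - LinearMap.mulRight ℂ h
  have key : ∀ k : ℕ, h * e ^ k - e ^ k * h = ((k : ℂ) * c) • e ^ k := by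
    intro k
    induction k with
    | zero => simp
    | succ k ih =>
      have : h * e ^ (k+1) - e ^ (k+1) * h
          = (h * e ^ k - e ^ k * h) * e + e ^ k * (h * e - e * h) := by
        rw [pow_succ]; noncomm_ring
      rw [this, ih, hh, smul_mul_assoc, mul_smul_comm, ← pow_succ, ← add_smul]
      congr 1; push_cast; ring
  have hev : ∀ k : ℕ, ad.HasEigenvalue ((k : ℂ) * c) := fun k =>
    Module.End.hasEigenvalue_of_hasEigenvector (x := e ^ k)
      ⟨Module.End.mem_eigenspace_iff.2 (by simpa [ad] using key k), hne k⟩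
  have hfin := Module.End.finite_hasEigenvalue (f := ad)
  have hinj : Function.Injective (fun k : ℕ => (k : ℂ) * c) := by
    intro a b hab
    exact_mod_cast mul_right_cancel₀ hc hab
  exact Set.infinite_of_injective_forall_mem hinj hev hfin

section sl2
variable {V : Type} [AddCommGroup V] [Module ℂ V]
  (e f h : Module.End ℂ V)

lemma h_fpow (hf : ∀ x, h (f x) = f (h x) - (2 : ℂ) • f x)
    (l : ℂ) (x w : V) (hx : h x = l • x + w) (k : ℕ) :
    h ((f ^ k) x) = (l - 2 * k) • (f ^ k) x + (f ^ k) w := by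
  induction k with
  | zero => simp [hx]
  | succ k ih =>
    rw [pow_succ', Module.End.mul_apply, Module.End.mul_apply, hf, ih, map_add, map_smul]
    push_cast
    module

lemma h_epow (he : ∀ x, h (e x) = e (h x) + (2 : ℂ) • e x)
    (l : ℂ) (x w : V) (hx : h x = l • x + w) (k : ℕ) :
    h ((e ^ k) x) = (l + 2 * k) • (e ^ k) x + (e ^ k) w := by
  induction k with
  | zero => simp [hx]
  | succ k ih =>
    rw [pow_succ', Module.End.mul_apply, Module.End.mul_apply, he, ih, map_add, map_smul]
    push_cast
    module

lemma e_fpow (hf : ∀ x, h (f x) = f (h x) - (2 : ℂ) • f x)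
    (hef : ∀ x, e (f x) = f (e x) + h x)
    (l : ℂ) (x w : V) (hx : h x = l • x + w) (hex : e x = 0) (k : ℕ) :
    e ((f ^ (k+1)) x) = ((k + 1 : ℂ) * (l - k)) • (f ^ k) x + (k + 1 : ℂ) • (f ^ k) w := by
  induction k with
  | zero => simp [hef, hx, hex]
  | succ k ih =>
    rw [pow_succ', Module.End.mul_apply, hef, ih, h_fpow f h hf l x w hx, map_add, map_smul,
      map_smul, ← Module.End.mul_apply, ← pow_succ', ← Module.End.mul_apply, ← pow_succ']
    push_cast
    module

/-- A highest weight in a module with `f` nilpotent is a natural number. -/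
lemma highest_weight_nat (hf : ∀ x, h (f x) = f (h x) - (2 : ℂ) • f x)
    (hef : ∀ x, e (f x) = f (e x) + h x) (hnil : ∃ m : ℕ, f ^ m = 0)
    (l : ℂ) (w : V) (hw : h w = l • w) (hew : e w = 0) (hw0 : w ≠ 0) :
    ∃ m : ℕ, l = m ∧ (f ^ m) w ≠ 0 ∧ (f ^ (m+1)) w = 0 := by
  classical
  have hex : ∃ m : ℕ, (f ^ m) w = 0 := by
    obtain ⟨m, hm⟩ := hnil
    exact ⟨m, by simp [hm]⟩
  obtain ⟨m, hm⟩ : ∃ m, Nat.find hex = m + 1 := by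
    refine Nat.exists_eq_succ_of_ne_zero fun h0 => ?_
    have := Nat.find_spec hex
    rw [h0] at this
    exact hw0 (by simpa using this)
  have h1 : (f ^ (m+1)) w = 0 := hm ▸ Nat.find_spec hex
  have h2 : (f ^ m) w ≠ 0 := Nat.find_min hex (by omega)
  refine ⟨m, ?_, h2, h1⟩
  have := e_fpow e f h hf hef l w 0 (by simpa using hw) hew m
  rw [h1] at this
  simp only [map_zero, smul_zero, add_zero] at this
  have h3 := (smul_eq_zero.1 this.symm).resolve_right h2
  have h4 : (m + 1 : ℂ) ≠ 0 := by exact_mod_cast Nat.succ_ne_zero m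
  exact sub_eq_zero.1 ((mul_eq_zero.1 h3).resolve_left h4)

lemma ker_e_semisimple (he : ∀ x, h (e x) = e (h x) + (2 : ℂ) • e x)
    (hf : ∀ x, h (f x) = f (h x) - (2 : ℂ) • f x)
    (hef : ∀ x, e (f x) = f (e x) + h x) (hnil : ∃ m : ℕ, f ^ m = 0)
    (l : ℂ) (x w : V) (hx : h x = l • x + w) (hw : h w = l • w) (hex : e x = 0) : w = 0 := by
  by_contra hw0
  have hew : e w = 0 := by
    have h1 := he x
    have : w = h x - l • x := by rw [hx]; module
    rw [this, map_sub, map_smul, hex, smul_zero, sub_zero]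
    simpa [hex] using h1.symm
  obtain ⟨m, rfl, hm0, hm1⟩ := highest_weight_nat e f h hf hef hnil l w hw hew hw0
  have hform := e_fpow e f h hf hef m x w hx hex
  have hne : ∀ j : ℕ, (f ^ (m + 1 + j)) x ≠ 0 := by
    intro j
    induction j with
    | zero =>
      intro h0
      have := hform m
      rw [add_zero] at h0
      rw [h0] at this
      simp only [map_zero, sub_self, mul_zero, zero_smul, zero_add] at this
      have h4 : (m + 1 : ℂ) ≠ 0 := by exact_mod_cast Nat.succ_ne_zero m
      exact hm0 ((smul_eq_zero.1 this.symm).resolve_left h4)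
    | succ j ih =>
      intro h0
      have := hform (m + 1 + j)
      have hz : (f ^ (m + 1 + j)) w = 0 := by
        rw [add_comm, pow_add, Module.End.mul_apply, hm1, map_zero]
      rw [show m + 1 + j + 1 = m + 1 + (j + 1) by ring, h0, hz] at this
      simp only [map_zero, smul_zero, add_zero] at this
      have h3 := (smul_eq_zero.1 this.symm).resolve_right ih
      rcases mul_eq_zero.1 h3 with h4 | h4
      · exact absurd h4 (by exact_mod_cast Nat.succ_ne_zero (m + 1 + j))
      · have : (m : ℂ) = ((m + 1 + j : ℕ) : ℂ) := sub_eq_zero.1 h4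
        have := Nat.cast_injective this
        omega
  obtain ⟨M, hM⟩ := hnil
  apply hne M
  rw [pow_add, hM]
  simp

/-- `e f` is injective on weight spaces of positive weight. -/
lemma ef_inj (he : ∀ x, h (e x) = e (h x) + (2 : ℂ) • e x)
    (hef : ∀ x, e (f x) = f (e x) + h x) (hnil : ∃ m : ℕ, e ^ m = 0)
    (m : ℕ) (x : V) (hx : h x = (m + 2 : ℂ) • x) (h0 : e (f x) = 0) : x = 0 := by
  by_contra hx0
  have hh := h_epow e h he (m + 2) x 0 (by simpa using hx)
  have key : ∀ k : ℕ, f ((e ^ (k+1)) x) = (-((k + 1 : ℂ) * (m + 2 + k))) • (e ^ k) x := by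
    intro k
    induction k with
    | zero =>
      have := hef x
      rw [h0, hx] at this
      simp only [zero_add, pow_one, pow_zero, Module.End.one_apply, Nat.cast_zero]
      rw [eq_neg_of_add_eq_zero_left this.symm]
      module
    | succ k ih =>
      have h1 := hef ((e ^ (k+1)) x)
      have hp : ∀ j : ℕ, e ((e ^ j) x) = (e ^ (j+1)) x := fun j => by
        rw [pow_succ', Module.End.mul_apply]
      rw [ih, hh, map_smul, hp, hp, map_zero, add_zero] at h1
      rw [← sub_eq_iff_eq_add] at h1
      rw [← h1]
      push_cast
      module
  have hne : ∀ k : ℕ, (e ^ k) x ≠ 0 := by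
    intro k
    induction k with
    | zero => simpa using hx0
    | succ k ih =>
      intro hz
      have := key k
      rw [hz, map_zero] at this
      have h3 := (smul_eq_zero.1 this.symm).resolve_right ih
      rw [neg_eq_zero] at h3
      have : ((k + 1) * (m + 2 + k) : ℕ) = 0 := by exact_mod_cast h3
      simp at this
  obtain ⟨M, hM⟩ := hnil
  exact hne M (by simp [hM])

lemma h_semisimple_aux [FiniteDimensional ℂ V] (he : ∀ x, h (e x) = e (h x) + (2 : ℂ) • e x)
    (hf : ∀ x, h (f x) = f (h x) - (2 : ℂ) • f x)
    (hef : ∀ x, e (f x) = f (e x) + h x) (hnil : ∃ m : ℕ, f ^ m = 0) (hnil' : ∃ m : ℕ, e ^ m = 0)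
    (l : ℂ) (v w : V) (hv : h v = l • v + w) (hw : h w = l • w) (hew : e w = 0) : w = 0 := by
  by_contra hw0
  obtain ⟨m, rfl, -, -⟩ := highest_weight_nat e f h hf hef hnil l w hw hew hw0
  let W := Module.End.eigenspace h (m + 2 : ℂ)
  have hmaps : ∀ x ∈ W, (e ∘ₗ f) x ∈ W := by
    intro x hx
    rw [Module.End.mem_eigenspace_iff] at hx ⊢
    rw [LinearMap.comp_apply, he, hf, hx, map_sub, map_smul, map_smul, map_smul]
    module
  let g : W →ₗ[ℂ] W := (e ∘ₗ f).restrict hmaps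
  have hg : Function.Injective g := by
    rw [injective_iff_map_eq_zero]
    intro x hx
    apply Subtype.ext
    refine ef_inj e f h he hef hnil' m x (Module.End.mem_eigenspace_iff.1 x.2) ?_
    exact congrArg Subtype.val hx
  have hu : e v ∈ W := by
    rw [Module.End.mem_eigenspace_iff, he, hv, map_add, map_smul, hew]
    module
  obtain ⟨z, hz⟩ := (LinearMap.injective_iff_surjective.1 hg) ⟨e v, hu⟩
  have hz' : e (f z) = e v := congrArg Subtype.val hz
  have hzW : h z = (m + 2 : ℂ) • (z : V) := Module.End.mem_eigenspace_iff.1 z.2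
  refine hw0 (ker_e_semisimple e f h he hf hef hnil m (v - f z) w ?_ hw ?_)
  · rw [map_sub, hv, hf, hzW, map_smul]
    module
  · rw [map_sub, hz', sub_self]

lemma h_semisimple [FiniteDimensional ℂ V] (he : ∀ x, h (e x) = e (h x) + (2 : ℂ) • e x)
    (hf : ∀ x, h (f x) = f (h x) - (2 : ℂ) • f x)
    (hef : ∀ x, e (f x) = f (e x) + h x) (hnil : ∃ m : ℕ, f ^ m = 0) (hnil' : ∃ m : ℕ, e ^ m = 0)
    (l : ℂ) (v w : V) (hv : h v = l • v + w) (hw : h w = l • w) : w = 0 := by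
  classical
  by_contra hw0
  have hex : ∃ m : ℕ, (e ^ m) w = 0 := by
    obtain ⟨m, hm⟩ := hnil'
    exact ⟨m, by simp [hm]⟩
  obtain ⟨m, hm⟩ : ∃ m, Nat.find hex = m + 1 := by
    refine Nat.exists_eq_succ_of_ne_zero fun h0 => ?_
    have := Nat.find_spec hex
    rw [h0] at this
    exact hw0 (by simpa using this)
  have h1 : (e ^ (m+1)) w = 0 := hm ▸ Nat.find_spec hex
  have h2 : (e ^ m) w ≠ 0 := Nat.find_min hex (by omega)
  refine h2 (h_semisimple_aux e f h he hf hef hnil hnil' (l + 2 * m) ((e ^ m) v) _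
    (h_epow e h he l v w hv m) ?_ ?_)
  · simpa using h_epow e h he l w 0 (by simpa using hw) m
  · rw [← Module.End.mul_apply, ← pow_succ', h1]

lemma h_diag [FiniteDimensional ℂ V] (he : ∀ x, h (e x) = e (h x) + (2 : ℂ) • e x)
    (hf : ∀ x, h (f x) = f (h x) - (2 : ℂ) • f x)
    (hef : ∀ x, e (f x) = f (e x) + h x) (hnil : ∃ m : ℕ, f ^ m = 0) (hnil' : ∃ m : ℕ, e ^ m = 0) :
    (⨆ c : ℂ, Module.End.eigenspace h c) = ⊤ := by
  rw [eq_top_iff, ← Module.End.iSup_maxGenEigenspace_eq_top h]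
  refine iSup_mono fun l x hx => ?_
  rw [Module.End.mem_maxGenEigenspace] at hx
  obtain ⟨k, hk⟩ := hx
  rw [Module.End.mem_eigenspace_iff]
  induction k generalizing x with
  | zero => simp_all
  | succ k ih =>
    rw [pow_succ, Module.End.mul_apply] at hk
    have h1 := ih _ hk
    have h2 := h_semisimple e f h he hf hef hnil hnil' l x ((h - l • (1 : Module.End ℂ V)) x)
      (by simp) h1
    exact sub_eq_zero.1 (by simpa using h2)

end sl2

lemma conj_unit {A : Type*} [Ring A] [Algebra ℂ A] (D a r : A) (h1 : D * a = a * D + r)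
    (h2 : D * r = r * D) (m : ℕ) (hD : D ^ m = 0) : ∃ u : Aˣ, (u : A) * a = (a + r) * u := by
  have key : ∀ k : ℕ, D ^ (k+1) * a = a * D ^ (k+1) + (k + 1 : ℂ) • (r * D ^ k) := by
    intro k
    induction k with
    | zero => simp [h1]
    | succ k ih =>
      have hc : D * (r * D ^ k) = r * D ^ (k+1) := by
        rw [← mul_assoc, h2, mul_assoc, ← pow_succ']
      rw [pow_succ' D (k+1), mul_assoc, ih, mul_add, mul_smul_comm, hc, ← mul_assoc, h1, add_mul,
        mul_assoc]
      push_cast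
      module
  let S : A := ∑ k ∈ Finset.range m, ((k+1).factorial : ℂ)⁻¹ • D ^ k
  let T : A := ∑ k ∈ Finset.range (m+1), (k.factorial : ℂ)⁻¹ • D ^ k
  have hTS : T = 1 + D * S := by
    simp only [T, S, Finset.sum_range_succ', Finset.mul_sum]
    rw [add_comm]
    simp [pow_succ']
  have hcomm : Commute D S :=
    Commute.sum_right _ _ _ fun k _ => ((Commute.refl D).pow_right k).smul_right _
  have hu : IsUnit T := by
    rw [hTS]
    exact (hcomm.isNilpotent_mul_right ⟨m, hD⟩).isUnit_one_add
  refine ⟨hu.unit, ?_⟩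
  change T * a = (a + r) * T
  have hT' : T = ∑ k ∈ Finset.range m, (k.factorial : ℂ)⁻¹ • D ^ k := by
    simp only [T, Finset.sum_range_succ, hD, smul_zero, add_zero]
  have e1 : r * T = ∑ k ∈ Finset.range m, (k.factorial : ℂ)⁻¹ • (r * D ^ k) := by
    rw [hT', Finset.mul_sum]
    simp
  rw [add_mul, e1]
  simp only [T, Finset.sum_range_succ', Finset.mul_sum, Finset.sum_mul, add_mul, mul_add]
  rw [add_right_comm, ← Finset.sum_add_distrib]
  congr 1
  · refine Finset.sum_congr rfl fun k _ => ?_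
    rw [smul_mul_assoc, key, smul_add, mul_smul_comm, smul_smul]
    congr 2
    have h3 : (k + 1 : ℂ) ≠ 0 := by exact_mod_cast Nat.succ_ne_zero k
    have h4 : (k.factorial : ℂ) ≠ 0 := by exact_mod_cast Nat.factorial_ne_zero k
    rw [Nat.factorial_succ]
    push_cast
    field_simp
  · simp

lemma exists_deriv (N : Type) [AddCommGroup N] [Module ℂ N] (eN : N →ₗ[ℂ] N)
    (hfree : Module.Free (Polynomial ℂ) (Module.AEval' eN)) :
    ∃ d : N →ₗ[ℂ] N, ∀ x, d (eN x) = eN (d x) + x := by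
  let b := Module.Free.chooseBasis (Polynomial ℂ) (Module.AEval' eN)
  let ρ : N ≃ₗ[ℂ] (Module.Free.ChooseBasisIndex (Polynomial ℂ) (Module.AEval' eN) →₀ ℂ[X]) :=
    (Module.AEval'.of eN).trans (b.repr.restrictScalars ℂ)
  have hρ : ∀ x, ρ (eN x) = (X : ℂ[X]) • ρ x := by
    intro x
    change b.repr (Module.AEval'.of eN (eN x)) = X • b.repr (Module.AEval'.of eN x)
    rw [← Module.AEval'.X_smul_of, map_smul]
  let δ := Finsupp.mapRange.linearMap
    (α := Module.Free.ChooseBasisIndex (Polynomial ℂ) (Module.AEval' eN))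
    (Polynomial.derivative (R := ℂ))
  refine ⟨ρ.symm.toLinearMap ∘ₗ δ ∘ₗ ρ.toLinearMap, fun x => ?_⟩
  apply ρ.injective
  simp only [LinearMap.comp_apply, LinearEquiv.coe_coe, map_add, hρ, LinearEquiv.apply_symm_apply]
  ext1 i
  simp [δ]
  ring

theorem tensor_preserves_borel_category
    -- a finite dimensional sl₂-module `V`
    (V : Type) [AddCommGroup V] [Module ℂ V] [FiniteDimensional ℂ V]
    (eV fV hV : V →ₗ[ℂ] V)
    (hVhe : hV ∘ₗ eV - eV ∘ₗ hV = (2 : ℂ) • eV)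
    (hVhf : hV ∘ₗ fV - fV ∘ₗ hV = (-2 : ℂ) • fV)
    (hVef : eV ∘ₗ fV - fV ∘ₗ eV = hV)
    -- a `𝔟`-module `N`
    (N : Type) [AddCommGroup N] [Module ℂ N]
    (eN hN : N →ₗ[ℂ] N)
    (hNhe : hN ∘ₗ eN - eN ∘ₗ hN = (2 : ℂ) • eN)
    -- `N` is finitely generated over `U(𝔟)`
    (hfg : ∃ s : Finset N, ∀ p : Submodule ℂ N,
      (∀ x ∈ p, eN x ∈ p) → (∀ x ∈ p, hN x ∈ p) → (↑s : Set N) ⊆ (p : Set N) → p = ⊤)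
    -- `N` is `h`-diagonalizable
    (hdiag : (⨆ c : ℂ, Module.End.eigenspace hN c) = ⊤)
    -- `N` is free over `U(e) = ℂ[e]`
    (hfree : Module.Free (Polynomial ℂ) (Module.AEval' eN)) :
    -- then `V ⊗ N`, with the `𝔟`-module structure given by the operators
    -- `e = eV ⊗ 1 + 1 ⊗ eN` and `h = hV ⊗ 1 + 1 ⊗ hN`, is again finitely
    -- generated, `h`-diagonalizable and free over `ℂ[e]`.
    (∃ s : Finset (V ⊗[ℂ] N), ∀ p : Submodule ℂ (V ⊗[ℂ] N),
      (∀ x ∈ p, (LinearMap.rTensor N eV + LinearMap.lTensor V eN) x ∈ p) →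
      (∀ x ∈ p, (LinearMap.rTensor N hV + LinearMap.lTensor V hN) x ∈ p) →
      (↑s : Set (V ⊗[ℂ] N)) ⊆ (p : Set (V ⊗[ℂ] N)) → p = ⊤) ∧
    ((⨆ c : ℂ, Module.End.eigenspace (LinearMap.rTensor N hV + LinearMap.lTensor V hN) c) = ⊤) ∧
    Module.Free (Polynomial ℂ)
      (Module.AEval' (LinearMap.rTensor N eV + LinearMap.lTensor V eN)) := by
  have heV : ∀ x, hV (eV x) = eV (hV x) + (2 : ℂ) • eV x := fun x => by
    have := LinearMap.congr_fun hVhe x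
    exact sub_eq_iff_eq_add'.1 this
  have hfV : ∀ x, hV (fV x) = fV (hV x) - (2 : ℂ) • fV x := fun x => by
    have := LinearMap.congr_fun hVhf x
    rw [sub_eq_add_neg, ← neg_smul]
    exact sub_eq_iff_eq_add'.1 this
  have hefV : ∀ x, eV (fV x) = fV (eV x) + hV x := fun x => by
    have := LinearMap.congr_fun hVef x
    exact sub_eq_iff_eq_add'.1 this
  have hnilE : ∃ m : ℕ, eV ^ m = 0 := nilp_of_weight eV hV 2 (by norm_num) hVhe
  have hnilF : ∃ m : ℕ, fV ^ m = 0 := nilp_of_weight fV hV (-2) (by norm_num) hVhf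
  refine ⟨?_, ?_, ?_⟩
  · classical
    obtain ⟨s, hs⟩ := hfg
    let b := Module.finBasis ℂ V
    refine ⟨(Finset.univ ×ˢ s).image (fun p => b p.1 ⊗ₜ[ℂ] p.2), fun p hpe hph hsp => ?_⟩
    let q : Submodule ℂ N :=
      { carrier := {n | ∀ v : V, v ⊗ₜ[ℂ] n ∈ p}
        add_mem' := fun {x y} hx hy v => by
          rw [TensorProduct.tmul_add]; exact p.add_mem (hx v) (hy v)
        zero_mem' := fun v => by rw [TensorProduct.tmul_zero]; exact p.zero_mem
        smul_mem' := fun c x hx v => by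
          rw [TensorProduct.tmul_smul]; exact p.smul_mem c (hx v) }
    have hq : q = ⊤ := by
      apply hs
      · intro x hx v
        have h1 := hpe _ (hx v)
        have h2 := p.sub_mem h1 (hx (eV v))
        simpa using h2
      · intro x hx v
        have h1 := hph _ (hx v)
        have h2 := p.sub_mem h1 (hx (hV v))
        simpa using h2
      · intro n hn v
        rw [← b.sum_repr v, TensorProduct.sum_tmul]
        refine p.sum_mem fun i _ => ?_
        rw [← TensorProduct.smul_tmul']
        refine p.smul_mem _ (hsp ?_)
        simp only [Finset.coe_image, Set.mem_image]
        exact ⟨(i, n), by simpa using hn, rfl⟩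
    rw [eq_top_iff, ← TensorProduct.span_tmul_eq_top, Submodule.span_le]
    rintro _ ⟨v, n, rfl⟩
    have : n ∈ q := hq ▸ Submodule.mem_top
    exact this v
  · have hdV := h_diag eV fV hV heV hfV hefV hnilF hnilE
    set P := ⨆ c : ℂ, Module.End.eigenspace
      (LinearMap.rTensor N hV + LinearMap.lTensor V hN) c with hP
    rw [eq_top_iff, ← TensorProduct.span_tmul_eq_top, Submodule.span_le]
    rintro _ ⟨v, n, rfl⟩
    have hv : v ∈ ⨆ c : ℂ, Module.End.eigenspace hV c := hdV ▸ Submodule.mem_top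
    have hn : n ∈ ⨆ c : ℂ, Module.End.eigenspace hN c := hdiag ▸ Submodule.mem_top
    change v ⊗ₜ[ℂ] n ∈ P
    induction hv using Submodule.iSup_induction' with
    | zero => rw [TensorProduct.zero_tmul]; exact P.zero_mem
    | add x y _ _ hx hy => rw [TensorProduct.add_tmul]; exact P.add_mem hx hy
    | mem a x hx =>
      induction hn using Submodule.iSup_induction' with
      | zero => rw [TensorProduct.tmul_zero]; exact P.zero_mem
      | add y z _ _ hy hz => rw [TensorProduct.tmul_add]; exact P.add_mem hy hz
      | mem c y hy =>
        rw [Module.End.mem_eigenspace_iff] at hx hy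
        refine Submodule.mem_iSup_of_mem (a + c) ?_
        rw [Module.End.mem_eigenspace_iff]
        simp only [LinearMap.add_apply, LinearMap.rTensor_tmul, LinearMap.lTensor_tmul, hx, hy,
          TensorProduct.tmul_smul, ← TensorProduct.smul_tmul', add_smul]
  · obtain ⟨d, hd⟩ := exists_deriv N eN hfree
    obtain ⟨m, hm⟩ := hnilE
    obtain ⟨u, hu⟩ := conj_unit (A := Module.End ℂ (V ⊗[ℂ] N)) (TensorProduct.map eV d)
      (LinearMap.lTensor V eN) (LinearMap.rTensor N eV)
      (by ext v n; simp [hd, TensorProduct.tmul_add])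
      (by ext v n; simp) m (by rw [TensorProduct.map_pow, hm, TensorProduct.map_zero_left])
    let b := Module.finBasis ℂ V
    let U : (V ⊗[ℂ] N) ≃ₗ[ℂ] (V ⊗[ℂ] N) := LinearMap.GeneralLinearGroup.generalLinearEquiv ℂ _ u
    let ψ : (V ⊗[ℂ] N) ≃ₗ[ℂ] (Fin (Module.finrank ℂ V) →₀ Module.AEval' eN) :=
      (TensorProduct.equivFinsuppOfBasisLeft b).trans
        (Finsupp.mapRange.linearEquiv (Module.AEval'.of eN))
    have hψ : ∀ x, ψ (LinearMap.lTensor V eN x) = (X : ℂ[X]) • ψ x := by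
      intro x
      induction x with
      | zero => simp
      | add x y hx hy => rw [map_add, map_add, hx, hy, map_add, smul_add]
      | tmul v n =>
        ext i
        simp only [ψ, LinearEquiv.trans_apply, LinearMap.lTensor_tmul, Finsupp.smul_apply,
          Finsupp.mapRange.linearEquiv_apply, Finsupp.mapRange_apply,
          TensorProduct.equivFinsuppOfBasisLeft_apply_tmul_apply]
        rw [Module.AEval'.X_smul_of]
        simp
    have hU : ∀ x, U.symm ((LinearMap.rTensor N eV + LinearMap.lTensor V eN) x)
        = LinearMap.lTensor V eN (U.symm x) := by
      intro x
      rw [LinearEquiv.symm_apply_eq]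
      have := LinearMap.congr_fun hu (U.symm x)
      rw [Module.End.mul_apply, Module.End.mul_apply] at this
      have hx : (u : Module.End ℂ (V ⊗[ℂ] N)) (U.symm x) = x := U.apply_symm_apply x
      rw [hx, add_comm] at this
      exact this.symm
    exact Module.Free.of_equiv (LinearEquiv.ofAEval
      (LinearMap.rTensor N eV + LinearMap.lTensor V eN) (U.symm.trans ψ) (fun x => by
        change ψ (U.symm ((LinearMap.rTensor N eV + LinearMap.lTensor V eN) x)) = _
        rw [hU, hψ]; rfl)).symm
end

section
/- For every λ ∈ ℂ and every integer n ≥ 1, the ℂ-linear operator N⊗1 + 1⊗J_n(λ) on ℂ²⊗_ℂℂⁿ, where N is the 2×2 nilpotent Jordan block and J_n(λ) the n×n Jordan block with eigenvalue λ, is similar to the direct sum J_{n+1}(λ) ⊕ J_{n−1}(λ) (the second summand being absent when n = 1). Equivalently, as modules over the one-dimensional Lie algebra ℂg with g acting by N on ℂ² and by J_n(λ) on ℂⁿ, one has ℂ²⊗M(n,λ) ≅ M(n+1,λ) ⊕ M(n−1,λ). -/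
/-!
Statement 19.  For every `lam ∈ ℂ` and every integer `n ≥ 1`, the operator
`N ⊗ 1 + 1 ⊗ J_n(lam)` on `ℂ² ⊗ ℂⁿ` (where `N = J₂(0)` is the 2×2 nilpotent
Jordan block and `J_n(lam)` the `n×n` Jordan block with eigenvalue `lam`) is
similar to `J_{n+1}(lam) ⊕ J_{n-1}(lam)` (the second summand being absent when
`n = 1`, since `Fin (n-1)` is then empty).  Equivalently, for the
one-dimensional Lie algebra `ℂg` acting by `N` on `ℂ²` and by `J_n(lam)` on
`ℂⁿ` one has `ℂ² ⊗ M(n,lam) ≅ M(n+1,lam) ⊕ M(n-1,lam)`, where `g` acts on a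
tensor product by `g·(u⊗v) = gu⊗v + u⊗gv`, i.e. by the operator
`N ⊗ 1 + 1 ⊗ J_n(lam)`.
-/

/-- The `n × n` Jordan block with eigenvalue `lam`: `lam` on the diagonal and
`1` on the superdiagonal. -/
def jordanBlock (n : ℕ) (lam : ℂ) : Matrix (Fin n) (Fin n) ℂ :=
  Matrix.of fun i j => if (j : ℕ) = (i : ℕ) then lam
    else if (j : ℕ) = (i : ℕ) + 1 then 1 else 0

/-- Extension of a finite vector by zero. -/
def jbExt {n : ℕ} (w : Fin n → ℂ) (j : ℕ) : ℂ := if h : j < n then w ⟨j, h⟩ else 0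

theorem jbExt_fin {n : ℕ} (w : Fin n → ℂ) (i : Fin n) : jbExt w i = w i := by
  simp [jbExt]

theorem jbExt_ge {n : ℕ} (w : Fin n → ℂ) (j : ℕ) (h : n ≤ j) : jbExt w j = 0 := by
  simp [jbExt, h]

theorem jb_mulVec {n : ℕ} (lam : ℂ) (w : Fin n → ℂ) (i : Fin n) :
    (jordanBlock n lam).mulVec w i = lam * w i + jbExt w (i + 1) := by
  have h1 : ∀ j : Fin n, jordanBlock n lam i j * w j
      = (if j = i then lam * w j else 0) + (if (j : ℕ) = i + 1 then w j else 0) := by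
    intro j
    simp only [jordanBlock, Matrix.of_apply, Fin.ext_iff]
    split_ifs <;> first | omega | simp
  simp only [Matrix.mulVec, dotProduct, h1, Finset.sum_add_distrib]
  congr 1
  · simp
  · by_cases h : (i : ℕ) + 1 < n
    · have : ∀ j : Fin n, ((j : ℕ) = i + 1) ↔ j = ⟨i + 1, h⟩ := by
        intro j; simp [Fin.ext_iff]
      simp [this, jbExt, h]
    · rw [jbExt_ge _ _ (by omega)]
      apply Finset.sum_eq_zero
      intro j _
      rw [if_neg (by omega)]

/-- The intertwining map. -/
def jbMap (n : ℕ) : ((Fin 2 × Fin n) → ℂ) →ₗ[ℂ] ((Fin (n + 1) ⊕ Fin (n - 1)) → ℂ) where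
  toFun v := Sum.elim
    (fun i => jbExt (fun j => v (0, j)) i + (i : ℕ) * jbExt (fun j => v (1, j)) (i - 1))
    (fun i => jbExt (fun j => v (0, j)) (i + 1)
      - ((n : ℂ) - 1 - (i : ℕ)) * jbExt (fun j => v (1, j)) i)
  map_add' u v := by
    ext (i | i) <;> simp only [Sum.elim_inl, Sum.elim_inr, Pi.add_apply, jbExt] <;>
      split_ifs <;> ring
  map_smul' c v := by
    ext (i | i) <;> simp only [Sum.elim_inl, Sum.elim_inr, Pi.smul_apply, jbExt,
      smul_eq_mul, RingHom.id_apply] <;> split_ifs <;> ring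

theorem jbMap_injective (n : ℕ) (hn : 1 ≤ n) : Function.Injective (jbMap n) := by
  rw [← LinearMap.ker_eq_bot, LinearMap.ker_eq_bot']
  intro v hv
  set a : Fin n → ℂ := fun j => v (0, j) with ha
  set b : Fin n → ℂ := fun j => v (1, j) with hb
  have hx : ∀ i : ℕ, i < n + 1 → jbExt a i + (i : ℂ) * jbExt b (i - 1) = 0 :=
    fun i h => congrFun hv (Sum.inl ⟨i, h⟩)
  have hy : ∀ i : ℕ, i < n - 1 → jbExt a (i + 1) - ((n : ℂ) - 1 - i) * jbExt b i = 0 :=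
    fun i h => congrFun hv (Sum.inr ⟨i, h⟩)
  have hn0 : (n : ℂ) ≠ 0 := by exact_mod_cast (by omega : n ≠ 0)
  have hb0 : ∀ i : ℕ, jbExt b i = 0 := by
    intro i
    by_cases h : i < n
    · have h1 := hx (i + 1) (by omega)
      simp only [Nat.add_sub_cancel] at h1
      push_cast at h1
      have h2 : jbExt a (i + 1) - ((n : ℂ) - 1 - i) * jbExt b i = 0 := by
        by_cases h' : i < n - 1
        · exact hy i h'
        · have e : n = i + 1 := by omega
          rw [jbExt_ge a (i + 1) (by omega)]
          have : (n : ℂ) = i + 1 := by exact_mod_cast e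
          rw [this]; ring
      have h3 : (n : ℂ) * jbExt b i = 0 := by linear_combination h1 - h2
      exact (mul_eq_zero.mp h3).resolve_left hn0
    · exact jbExt_ge _ _ (by omega)
  have ha0 : ∀ i : Fin n, a i = 0 := by
    intro i
    have h1 := hx i (by omega)
    rw [hb0, jbExt_fin] at h1
    simpa using h1
  ext ⟨k, i⟩
  fin_cases k
  · exact ha0 i
  · have := hb0 i
    rwa [jbExt_fin] at this

theorem jb_tensor (lam : ℂ) (n : ℕ) (v : (Fin 2 × Fin n) → ℂ) (k : Fin 2) (i : Fin n) :
    (Matrix.kroneckerMap (· * ·) (jordanBlock 2 0) (1 : Matrix (Fin n) (Fin n) ℂ)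
      + Matrix.kroneckerMap (· * ·) (1 : Matrix (Fin 2) (Fin 2) ℂ)
        (jordanBlock n lam)).mulVec v (k, i)
      = (if k = 0 then v (1, i) else 0) + (jordanBlock n lam).mulVec (fun j => v (k, j)) i := by
  rw [Matrix.add_mulVec, Pi.add_apply]
  simp only [Matrix.mulVec, dotProduct, Fintype.sum_prod_type, Matrix.kroneckerMap_apply,
    Fin.sum_univ_two]
  fin_cases k <;> simp [jordanBlock, Matrix.one_apply]

theorem jb_ext_step (lam : ℂ) (n : ℕ) (v : (Fin 2 × Fin n) → ℂ) (k : Fin 2) (j : ℕ) :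
    jbExt (fun i => (Matrix.kroneckerMap (· * ·) (jordanBlock 2 0) (1 : Matrix (Fin n) (Fin n) ℂ)
      + Matrix.kroneckerMap (· * ·) (1 : Matrix (Fin 2) (Fin 2) ℂ)
        (jordanBlock n lam)).mulVec v (k, i)) j
      = (if k = 0 then jbExt (fun i => v (1, i)) j else 0)
        + (lam * jbExt (fun i => v (k, i)) j + jbExt (fun i => v (k, i)) (j + 1)) := by
  by_cases h : j < n
  · have e : ∀ w : Fin n → ℂ, jbExt w j = w ⟨j, h⟩ := fun w => jbExt_fin w ⟨j, h⟩
    simp only [e]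
    rw [jb_tensor, jb_mulVec]
  · simp only [jbExt_ge _ j (by omega : n ≤ j), jbExt_ge _ (j + 1) (by omega : n ≤ j + 1)]
    simp

theorem jordan_block_tensor_decomposition (lam : ℂ) (n : ℕ) (hn : 1 ≤ n) :
    ∃ φ : ((Fin 2 × Fin n) → ℂ) ≃ₗ[ℂ] ((Fin (n + 1) ⊕ Fin (n - 1)) → ℂ),
      ∀ v : (Fin 2 × Fin n) → ℂ,
        φ (Matrix.toLin'
            (Matrix.kroneckerMap (· * ·) (jordanBlock 2 0)
                (1 : Matrix (Fin n) (Fin n) ℂ)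
              + Matrix.kroneckerMap (· * ·) (1 : Matrix (Fin 2) (Fin 2) ℂ)
                (jordanBlock n lam)) v)
          = Matrix.toLin'
              (Matrix.fromBlocks (jordanBlock (n + 1) lam) 0 0
                (jordanBlock (n - 1) lam)) (φ v) := by
  refine ⟨LinearMap.linearEquivOfInjective (jbMap n) (jbMap_injective n hn) ?_, ?_⟩
  · simp only [Module.finrank_fintype_fun_eq_card, Fintype.card_prod, Fintype.card_sum,
      Fintype.card_fin]
    omega
  intro v
  simp only [LinearMap.linearEquivOfInjective_apply, Matrix.toLin'_apply]
  rw [Matrix.fromBlocks_mulVec]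
  set a : Fin n → ℂ := fun j => v (0, j) with ha
  set b : Fin n → ℂ := fun j => v (1, j) with hb
  ext (i | i)
  · simp only [Sum.elim_inl, Matrix.zero_mulVec, add_zero]
    rw [jb_mulVec]
    have key : jbExt ((jbMap n v) ∘ Sum.inl) ((i : ℕ) + 1)
        = jbExt a (i + 1) + ((i : ℕ) + 1) * jbExt b i := by
      by_cases h : (i : ℕ) + 1 < n + 1
      · simp [jbExt, h, jbMap, ha, hb]
      · rw [jbExt_ge _ _ (by omega), jbExt_ge a _ (by omega), jbExt_ge b _ (by omega)]
        simp
    rw [key]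
    simp only [jbMap, LinearMap.coe_mk, AddHom.coe_mk, Sum.elim_inl, Function.comp, jb_ext_step]
    rcases Nat.eq_zero_or_pos (i : ℕ) with h | h
    · simp [h, ha, hb]; ring
    · have e : (i : ℕ) - 1 + 1 = i := by omega
      rw [e]
      simp [ha, hb]; ring
  · simp only [Sum.elim_inr, Matrix.zero_mulVec, zero_add]
    rw [jb_mulVec]
    have key : jbExt ((jbMap n v) ∘ Sum.inr) ((i : ℕ) + 1)
        = jbExt a (i + 2) - ((n : ℂ) - 1 - ((i : ℕ) + 1)) * jbExt b (i + 1) := by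
      by_cases h : (i : ℕ) + 1 < n - 1
      · rw [jbExt, dif_pos h]
        simp [jbMap, ha, hb]
      · have e : n = i + 2 := by omega
        have e' : (n : ℂ) = (i : ℕ) + 2 := by exact_mod_cast e
        rw [jbExt_ge _ _ (by omega), jbExt_ge a _ (by omega), e']
        ring
    rw [key]
    simp only [jbMap, LinearMap.coe_mk, AddHom.coe_mk, Sum.elim_inr, Function.comp, jb_ext_step]
    simp [ha, hb]; ring
end
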